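/- arXiv:1207.5141 — 3 statements merged into one kernel-verified Lean document; each statement's English description precedes it below -/
import Mathlib

section
/- Let n ≥ 2 and fix θ ∈ S^{n-1}. Let σ : ℝ^n × S^{n-1} → ℝ be continuous, bounded and nonnegative, let k : ℝ^n × S^{n-1} × S^{n-1} → ℝ be continuous and bounded, and let f : ℝ^n → ℝ be continuous with compact support. Then ∫_{S^{n-1}} k(x,θ,θ') ( ∫_{-∞}^0 exp(-∫_s^0 σ(x+τθ',θ')dτ) f(x+sθ') ds ) dν(θ') = ∫_{ℝ^n} k(x, θ, (x-y)/|x-y|) · exp( -∫_0^{|x-y|} σ( x - u(x-y)/|x-y|, (x-y)/|x-y| ) du ) · f(y) · |x-y|^{1-n} dy; that is, the once-scattered contribution K T_1^{-1} J f(x,θ) is a weakly singular integral operator in the spatial variable with singularity |x-y|^{-(n-1)}. -/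
open MeasureTheory Real Set Metric

/-!
Parametrising backwards rays by their length `r = -s`, the left-hand side is an integral of
`k(x,θ,ω) exp(-∫₀ʳ σ(x - uω,ω) du) f(x - rω)` over `Sⁿ⁻¹ × (0,∞)` for `dν dr`. In polar coordinates
`x - y = rω` one has `dy = rⁿ⁻¹ dr dν(ω)`, so the missing Jacobian is the kernel `|x-y|^{1-n}`.
Fubini applies because the integrand is continuous on the compact sphere times `ℝ` and vanishes
as soon as `x - rω` has left the support of `f`.
-/

theorem measurePreserving_coe_volumeIoiPow (m : ℕ) :
    MeasurePreserving (Subtype.val : Ioi (0 : ℝ) → ℝ) (.volumeIoiPow m)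
      ((volume.restrict (Ioi 0)).withDensity fun r ↦ .ofReal (r ^ m)) := by
  refine ⟨measurable_subtype_coe, Measure.ext fun s hs ↦ ?_⟩
  rw [Measure.map_apply measurable_subtype_coe hs, Measure.volumeIoiPow,
    withDensity_apply _ (measurable_subtype_coe hs),
    setLIntegral_subtype measurableSet_Ioi _ fun r ↦ ENNReal.ofReal (r ^ m),
    withDensity_apply _ hs, Measure.restrict_restrict hs, Subtype.image_preimage_coe, inter_comm]

theorem integral_prod_volumeIoiPow {X F : Type*} [MeasurableSpace X] [NormedAddCommGroup F]
    [NormedSpace ℝ F] (ν : Measure X) [SFinite ν] (m : ℕ) (g : X × ℝ → F) :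
    ∫ p : X × Ioi (0 : ℝ), g (p.1, p.2) ∂ν.prod (.volumeIoiPow m) =
      ∫ p in univ ×ˢ Ioi 0, p.2 ^ m • g p ∂ν.prod volume := by
  have hcoe := (MeasurePreserving.id ν).prod (measurePreserving_coe_volumeIoiPow m)
  have hemb : MeasurableEmbedding (Prod.map (id : X → X) (Subtype.val : Ioi (0 : ℝ) → ℝ)) :=
    MeasurableEmbedding.id.prodMap (.subtype_coe measurableSet_Ioi)
  calc
    _ = ∫ p, g p ∂ν.prod ((volume.restrict (Ioi 0)).withDensity fun r ↦ .ofReal (r ^ m)) :=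
      hcoe.integral_comp hemb g
    _ = ∫ p in univ ×ˢ Ioi 0, (ENNReal.ofReal (p.2 ^ m)).toReal • g p ∂ν.prod volume := by
      rw [prod_withDensity_right (by fun_prop),
        integral_withDensity_eq_integral_toReal_smul (by fun_prop) (by simp),
        ← Measure.prod_restrict, Measure.restrict_univ]
    _ = _ := setIntegral_congr_fun (MeasurableSet.univ.prod measurableSet_Ioi) fun p hp ↦ by
      simp only [ENNReal.toReal_ofReal (pow_nonneg (le_of_lt hp.2) m)]

section Polar

variable {E F : Type*} [NormedAddCommGroup E] [NormedSpace ℝ E] [FiniteDimensional ℝ E]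
  [Nontrivial E] [MeasurableSpace E] [BorelSpace E] [NormedAddCommGroup F] [NormedSpace ℝ F]
  (μ : Measure E) [μ.IsAddHaarMeasure]

theorem integral_eq_integral_toSphere_prod (g : E → F) :
    ∫ z, g z ∂μ = ∫ p : sphere (0 : E) 1 × ℝ in univ ×ˢ Ioi 0,
      p.2 ^ (Module.finrank ℝ E - 1) • g (p.2 • p.1) ∂μ.toSphere.prod volume :=
  calc
    ∫ z, g z ∂μ = ∫ z : ({0}ᶜ : Set E), g z ∂μ.comap Subtype.val := by
      rw [integral_subtype_comap (measurableSet_singleton _).compl, restrict_compl_singleton]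
    _ = ∫ p : sphere (0 : E) 1 × Ioi (0 : ℝ), g (p.2.1 • p.1)
          ∂μ.toSphere.prod (.volumeIoiPow (Module.finrank ℝ E - 1)) := by
      rw [← μ.measurePreserving_homeomorphUnitSphereProd.integral_comp
        (Homeomorph.measurableEmbedding _)]
      refine integral_congr_ae (.of_forall fun z ↦ ?_)
      simp [smul_inv_smul₀ (norm_ne_zero_iff.2 z.2)]
    _ = _ := integral_prod_volumeIoiPow _ _ fun p : sphere (0 : E) 1 × ℝ ↦ g (p.2 • p.1)

theorem integral_inv_norm_pow_smul (g : E → ℝ → F) :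
    ∫ z, (‖z‖ ^ (Module.finrank ℝ E - 1))⁻¹ • g (‖z‖⁻¹ • z) ‖z‖ ∂μ =
      ∫ p : sphere (0 : E) 1 × ℝ in univ ×ˢ Ioi 0, g p.1 p.2 ∂μ.toSphere.prod volume := by
  rw [integral_eq_integral_toSphere_prod]
  refine setIntegral_congr_fun (MeasurableSet.univ.prod measurableSet_Ioi) ?_
  rintro ⟨ω, r⟩ ⟨-, hr : 0 < r⟩
  have hnorm : ‖r • (ω : E)‖ = r := by simp [norm_smul, abs_of_pos hr]
  simp only [hnorm, inv_smul_smul₀ hr.ne', smul_inv_smul₀ (pow_ne_zero _ hr.ne')]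

end Polar

theorem integrableOn_univ_prod_Ioi_of_continuous {X F : Type*} [TopologicalSpace X]
    [CompactSpace X] [MeasurableSpace X] [OpensMeasurableSpace X] [NormedAddCommGroup F]
    {ν : Measure X} [IsFiniteMeasure ν] {g : X × ℝ → F} (hg : Continuous g) {a R : ℝ}
    (hR : ∀ ω, ∀ r > R, g (ω, r) = 0) :
    IntegrableOn g (univ ×ˢ Ioi a) (ν.prod volume) := by
  have hcompact : IntegrableOn g (univ ×ˢ Icc a R) (ν.prod volume) :=
    hg.continuousOn.integrableOn_compact' (isCompact_univ.prod isCompact_Icc)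
      (MeasurableSet.univ.prod measurableSet_Icc)
  refine hcompact.of_forall_sdiff_eq_zero (MeasurableSet.univ.prod measurableSet_Ioi) ?_
  rintro ⟨ω, r⟩ ⟨⟨-, hr⟩, hnotMem⟩
  exact hR ω r (not_le.1 fun h ↦ hnotMem ⟨mem_univ ω, le_of_lt hr, h⟩)

theorem exists_forall_apply_sub_smul_eq_zero {E F : Type*} [NormedAddCommGroup E] [NormedSpace ℝ E]
    [Zero F] {f : E → F} (hf : HasCompactSupport f) (x : E) :
    ∃ R : ℝ, ∀ ω : sphere (0 : E) 1, ∀ r > R, f (x - r • (ω : E)) = 0 := by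
  obtain ⟨R, hR⟩ := hf.isCompact.isBounded.subset_closedBall x
  refine ⟨R, fun ω r hr ↦ image_eq_zero_of_notMem_tsupport fun hmem ↦ hr.not_ge ?_⟩
  calc
    r ≤ |r| := le_abs_self r
    _ = dist (x - r • (ω : E)) x := by simp [norm_smul]
    _ ≤ R := hR hmem

section Transport

variable {E F : Type*} [NormedAddCommGroup E] [NormedSpace ℝ E]
  [NormedAddCommGroup F] [NormedSpace ℝ F]

/-- The attenuation `exp(-∫₀ʳ σ(x - uθ, θ) du)` accumulated along the last `r` units of length of
the ray arriving at `x` in direction `θ`. Directions are vectors of the ambient space, here and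
below. -/
noncomputable def attenuation (σ : E → E → ℝ) (x θ : E) (r : ℝ) : ℝ :=
  Real.exp (-∫ u in (0 : ℝ)..r, σ (x - u • θ) θ)

/-- The transport solution operator `T₁⁻¹` with absorption `σ`. -/
noncomputable def transportInverse (σ : E → E → ℝ) (g : E → E → F) (x θ : E) : F :=
  ∫ s in Iic (0 : ℝ), Real.exp (-∫ τ in s..(0 : ℝ), σ (x + τ • θ) θ) • g (x + s • θ) θ

/-- The scattering operator `K` with collision kernel `k`, for the measure `ν` on directions. -/
noncomputable def scatteringOperator [MeasurableSpace E] (ν : Measure (sphere (0 : E) 1))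
    (k : E → E → E → ℝ) (g : E → E → F) (x θ : E) : F :=
  ∫ ω : sphere (0 : E) 1, k x θ ω • g x ω ∂ν

theorem continuous_attenuation {σ : E → E → ℝ} (hσ : Continuous fun p : E × E ↦ σ p.1 p.2) :
    Continuous fun p : E × E × ℝ ↦ attenuation σ p.1 p.2.1 p.2.2 := by
  have hintegrand : Continuous fun q : (E × E × ℝ) × ℝ ↦ σ (q.1.1 - q.2 • q.1.2.1) q.1.2.1 := by
    fun_prop
  exact Real.continuous_exp.comp
    (intervalIntegral.continuous_parametric_intervalIntegral_of_continuous hintegrand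
      (by fun_prop)).neg

theorem attenuation_neg (σ : E → E → ℝ) (x θ : E) (s : ℝ) :
    attenuation σ x θ (-s) = Real.exp (-∫ τ in s..(0 : ℝ), σ (x + τ • θ) θ) := by
  have hreflect := intervalIntegral.integral_comp_neg (a := s) (b := 0)
    fun u ↦ σ (x - u • θ) θ
  simp only [neg_smul, sub_neg_eq_add, neg_zero] at hreflect
  rw [attenuation, hreflect]

theorem transportInverse_eq_integral_Ioi (σ : E → E → ℝ) (g : E → E → F) (x θ : E) :
    transportInverse σ g x θ =
      ∫ r in Ioi (0 : ℝ), attenuation σ x θ r • g (x - r • θ) θ := by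
  have hreflect := integral_comp_neg_Iic 0 fun r ↦ attenuation σ x θ r • g (x - r • θ) θ
  simpa only [transportInverse, attenuation_neg, neg_smul, sub_neg_eq_add, neg_zero] using hreflect

variable [FiniteDimensional ℝ E] [MeasurableSpace E] [BorelSpace E]

theorem scatteringOperator_transportInverse_eq_integral_prod (ν : Measure (sphere (0 : E) 1))
    [IsFiniteMeasure ν] {σ : E → E → ℝ} (hσ : Continuous fun p : E × E ↦ σ p.1 p.2)
    {k : E → E → E → ℝ} (x θ : E) (hk : Continuous (k x θ)) {f : E → F} (hf : Continuous f)
    (hfc : HasCompactSupport f) :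
    scatteringOperator ν k (transportInverse σ fun y _ ↦ f y) x θ =
      ∫ p : sphere (0 : E) 1 × ℝ in univ ×ˢ Ioi 0,
        k x θ p.1 • attenuation σ x p.1 p.2 • f (x - p.2 • (p.1 : E)) ∂ν.prod volume := by
  obtain ⟨R, hR⟩ := exists_forall_apply_sub_smul_eq_zero hfc x
  have hcont : Continuous fun p : sphere (0 : E) 1 × ℝ ↦
      k x θ p.1 • attenuation σ x p.1 p.2 • f (x - p.2 • (p.1 : E)) := by
    have hatt : Continuous fun p : sphere (0 : E) 1 × ℝ ↦ attenuation σ x p.1 p.2 :=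
      (continuous_attenuation hσ).comp
        (f := fun p : sphere (0 : E) 1 × ℝ ↦ (x, (p.1 : E), p.2)) (by fun_prop)
    fun_prop
  have hint := integrableOn_univ_prod_Ioi_of_continuous hcont (ν := ν) (a := 0) (R := R)
    fun ω r hr ↦ by simp only [hR ω r hr, smul_zero]
  simp only [setIntegral_prod _ hint, Measure.restrict_univ, integral_smul, scatteringOperator,
    transportInverse_eq_integral_Ioi]

theorem stmt6_general [Nontrivial E] (μ : Measure E) [μ.IsAddHaarMeasure]
    {σ : E → E → ℝ} (hσ : Continuous fun p : E × E ↦ σ p.1 p.2)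
    {k : E → E → E → ℝ} (x θ : E) (hk : Continuous (k x θ)) {f : E → F} (hf : Continuous f)
    (hfc : HasCompactSupport f) :
    scatteringOperator μ.toSphere k (transportInverse σ fun y _ ↦ f y) x θ =
      ∫ y, (‖x - y‖ ^ (Module.finrank ℝ E - 1))⁻¹ • k x θ (‖x - y‖⁻¹ • (x - y)) •
        attenuation σ x (‖x - y‖⁻¹ • (x - y)) ‖x - y‖ • f y ∂μ := by
  have hbase (y : E) : x - ‖x - y‖ • ‖x - y‖⁻¹ • (x - y) = y := by
    rcases eq_or_ne x y with rfl | hxy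
    · simp
    · rw [smul_inv_smul₀ (norm_sub_eq_zero_iff.not.2 hxy), sub_sub_cancel]
  rw [scatteringOperator_transportInverse_eq_integral_prod _ hσ x θ hk hf hfc,
    ← integral_inv_norm_pow_smul μ fun w r ↦ k x θ w • attenuation σ x w r • f (x - r • w),
    ← integral_sub_left_eq_self _ μ x]
  simp only [hbase]

end Transport

/-- The once-scattered contribution `K T₁⁻¹ J f(x,θ)` equals a weakly
singular integral operator in the spatial variable with singularity `|x-y|^{-(n-1)}`:
`∫_{Sⁿ⁻¹} k(x,θ,θ') (∫_{-∞}^0 exp(-∫_s^0 σ(x+τθ',θ')dτ) f(x+sθ') ds) dν(θ')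
  = ∫_{ℝⁿ} k(x,θ,(x-y)/|x-y|) exp(-∫_0^{|x-y|} σ(x-u(x-y)/|x-y|,(x-y)/|x-y|) du)
      f(y) |x-y|^{1-n} dy`. -/
theorem stmt6 (n : ℕ) (hn : 2 ≤ n) (θ : EuclideanSpace ℝ (Fin n)) (hθ : ‖θ‖ = 1)
    (ν : Measure (sphere (0 : EuclideanSpace ℝ (Fin n)) 1))
    (hν : ν = (volume : Measure (EuclideanSpace ℝ (Fin n))).toSphere)
    (σ : EuclideanSpace ℝ (Fin n) → EuclideanSpace ℝ (Fin n) → ℝ)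
    (hσ : Continuous fun p : EuclideanSpace ℝ (Fin n) × EuclideanSpace ℝ (Fin n) =>
      σ p.1 p.2)
    (hσb : ∃ M : ℝ, ∀ x v, |σ x v| ≤ M) (hσ0 : ∀ x v, 0 ≤ σ x v)
    (k : EuclideanSpace ℝ (Fin n) → EuclideanSpace ℝ (Fin n) →
      EuclideanSpace ℝ (Fin n) → ℝ)
    (hk : Continuous fun p : EuclideanSpace ℝ (Fin n) × EuclideanSpace ℝ (Fin n) ×
      EuclideanSpace ℝ (Fin n) => k p.1 p.2.1 p.2.2)
    (hkb : ∃ M : ℝ, ∀ x v w, |k x v w| ≤ M)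
    (f : EuclideanSpace ℝ (Fin n) → ℝ) (hf : Continuous f) (hfc : HasCompactSupport f) :
    ∀ x : EuclideanSpace ℝ (Fin n),
      (∫ ω : sphere (0 : EuclideanSpace ℝ (Fin n)) 1,
          k x θ (ω : EuclideanSpace ℝ (Fin n)) *
            (∫ s in Iic (0 : ℝ),
              Real.exp (-(∫ τ in s..(0 : ℝ),
                  σ (x + τ • (ω : EuclideanSpace ℝ (Fin n)))
                    (ω : EuclideanSpace ℝ (Fin n)))) *
                f (x + s • (ω : EuclideanSpace ℝ (Fin n)))) ∂ν) =
      ∫ y : EuclideanSpace ℝ (Fin n),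
        k x θ (‖x - y‖⁻¹ • (x - y)) *
          Real.exp (-(∫ u in (0 : ℝ)..‖x - y‖,
              σ (x - u • (‖x - y‖⁻¹ • (x - y))) (‖x - y‖⁻¹ • (x - y)))) *
          f y * (‖x - y‖ ^ (n - 1))⁻¹ := by
  intro x
  have : NeZero n := ⟨by omega⟩
  simpa only [hν, scatteringOperator, transportInverse, attenuation, smul_eq_mul,
    finrank_euclideanSpace_fin, mul_comm (_)⁻¹, mul_assoc] using
    stmt6_general volume hσ x θ (by fun_prop) hf hfc
end

section
/- Let n ≥ 3, let 2 ≤ m ≤ n-1, and let Ω ⊂ ℝ^n be a bounded measurable set. Then there exists a constant C > 0 such that for all x, y ∈ ℝ^n with x ≠ y, setting y_0 := x and y_m := y, ∫_{Ω} ⋯ ∫_{Ω} ∏_{j=0}^{m-1} |y_j - y_{j+1}|^{-(n-1)} dy_1 ⋯ dy_{m-1} ≤ C |x-y|^{-(n-m)}. -/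
/-!
The kernel `|z| ^ (1 - d)` is the Riesz kernel of order `1`, and Riesz kernels compose like
fractional integrals: orders add, `I_α ∗ I_β ≤ C I_{α + β}`, as long as `α + β < d`. By translation
and homogeneity the composition estimate reduces to a uniform bound at unit vectors `e`. There the
integrand is locally integrable at its poles `0` and `e` because `α, β > 0`, and integrable at
infinity because `α + β < d`. Iterating the estimate along a chain with all orders equal to `1`
gives the theorem.
-/

open MeasureTheory Real Set

section ChainPoint

open scoped ENNReal

variable {X : Type*} {k : ℕ}

/-- The points `y₀ = x, y₁, …, y_k, y_{k+1} = y` of the chain from `x` to `y` through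
`z = (y₁, …, y_k)`. -/
def chainPoint (x y : X) (z : Fin k → X) : Fin (k + 2) → X :=
  Fin.cons x (Fin.snoc (α := fun _ ↦ X) z y)

theorem chainPoint_zero (x y : X) (z : Fin k → X) : chainPoint x y z 0 = x :=
  rfl

theorem chainPoint_cons (x y w : X) (z : Fin k → X) :
    chainPoint x y (Fin.cons w z : Fin (k + 1) → X) = Fin.cons x (chainPoint w y z) := by
  simp only [chainPoint, Fin.cons_snoc_eq_snoc_cons]

theorem chainPoint_castSucc (x y : X) (z : Fin k → X) (j : Fin (k + 1)) :
    chainPoint x y z j.castSucc =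
      if (j : ℕ) = 0 then x else if h : (j : ℕ) - 1 < k then z ⟨j - 1, h⟩ else y := by
  cases j using Fin.cases with
  | zero => rfl
  | succ i => simp [chainPoint]

theorem chainPoint_succ (x y : X) (z : Fin k → X) (j : Fin (k + 1)) :
    chainPoint x y z j.succ = if h : (j : ℕ) < k then z ⟨j, h⟩ else y := by
  cases j using Fin.lastCases with
  | last => simp [chainPoint]
  | cast i => simp [chainPoint]

variable [MeasurableSpace X]

@[fun_prop]
theorem measurable_chainPoint (x y : X) :
    Measurable (chainPoint x y : (Fin k → X) → Fin (k + 2) → X) := by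
  refine measurable_pi_iff.2 fun j ↦ ?_
  cases j using Fin.cases with
  | zero => exact measurable_const
  | succ i =>
    simp only [chainPoint_succ]
    split_ifs <;> fun_prop

theorem lintegral_pi_fin_succ_le (μ : Measure X) [SigmaFinite μ]
    (f : (Fin (k + 1) → X) → ℝ≥0∞) :
    ∫⁻ z, f z ∂Measure.pi (fun _ ↦ μ) ≤
      ∫⁻ w, ∫⁻ z, f (Fin.cons w z) ∂Measure.pi (fun _ : Fin k ↦ μ) ∂μ := by
  have h_split := (measurePreserving_piFinSuccAbove (fun _ : Fin (k + 1) ↦ μ) 0).symm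
  rw [← h_split.lintegral_comp_emb (MeasurableEquiv.measurableEmbedding _)]
  refine (lintegral_prod_le _).trans_eq ?_
  simp only [MeasurableEquiv.piFinSuccAbove_symm_apply, Fin.insertNthEquiv_zero]
  rfl

end ChainPoint

section RieszKernel

open Metric Module
open scoped ENNReal

variable {E : Type*} [NormedAddCommGroup E] [NormedSpace ℝ E]

/-- The Riesz kernel `‖z‖ ^ (α - d)` of order `α` on a `d`-dimensional normed space, without the
usual normalising constant. It is extended-valued: for `α < d` its value at the origin is `∞`. -/
noncomputable def rieszKernel (α : ℝ) (z : E) : ℝ≥0∞ :=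
  ‖z‖ₑ ^ (α - finrank ℝ E)

theorem rieszKernel_zero {α : ℝ} (hα : α < finrank ℝ E) : rieszKernel α (0 : E) = ∞ := by
  rw [rieszKernel, enorm_zero, ENNReal.zero_rpow_of_neg (sub_neg.2 hα)]

theorem rieszKernel_natCast {a : ℕ} (ha : a ≤ finrank ℝ E) (z : E) :
    rieszKernel (a : ℝ) z = (ENNReal.ofReal (‖z‖ ^ (finrank ℝ E - a)))⁻¹ := by
  rw [rieszKernel, ← neg_sub, ENNReal.rpow_neg, ← Nat.cast_sub ha, ENNReal.rpow_natCast,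
    ENNReal.ofReal_pow (norm_nonneg z), ofReal_norm]

theorem rieszKernel_smul (α r : ℝ) (z : E) :
    rieszKernel α (r • z) = ‖r‖ₑ ^ (α - finrank ℝ E) * rieszKernel α z := by
  rw [rieszKernel, rieszKernel, enorm_smul, ENNReal.mul_rpow_of_ne_top enorm_ne_top enorm_ne_top]

theorem rieszKernel_le_of_le_norm {α r : ℝ} {z : E} (hα : α ≤ finrank ℝ E) (hr : r ≤ ‖z‖) :
    rieszKernel α z ≤ ENNReal.ofReal r ^ (α - finrank ℝ E) := by
  have hr' : ENNReal.ofReal r ≤ ‖z‖ₑ := by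
    rw [← ofReal_norm]
    exact ENNReal.ofReal_le_ofReal hr
  rw [rieszKernel, ← neg_sub, ENNReal.rpow_neg, ENNReal.rpow_neg]
  gcongr

theorem rieszKernel_mul_rieszKernel_le {α β : ℝ} (hα : α ≤ finrank ℝ E) (hβ : β ≤ finrank ℝ E)
    {e : E} (he : ‖e‖ = 1) (z : E) :
    rieszKernel α (e - z) * rieszKernel β z ≤
      ENNReal.ofReal (1 / 2) ^ (α - finrank ℝ E) * (ball 0 (1 / 2)).indicator (rieszKernel β) z +
      ENNReal.ofReal (1 / 2) ^ (β - finrank ℝ E) *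
        (ball 0 (1 / 2)).indicator (rieszKernel α) (e - z) +
      ENNReal.ofReal ((1 + ‖z‖) / 5) ^ (α + β - 2 * finrank ℝ E) := by
  have norm_sub_add : 1 ≤ ‖e - z‖ + ‖z‖ := by simpa [he] using norm_add_le (e - z) z
  have norm_le_add : ‖z‖ ≤ ‖e - z‖ + 1 := by
    simpa [he, norm_sub_rev, add_comm] using norm_add_le (z - e) e
  by_cases hz : ‖z‖ < 1 / 2
  · refine le_add_right (le_add_right ?_)
    rw [indicator_of_mem (mem_ball_zero_iff.2 hz)]
    gcongr
    exact rieszKernel_le_of_le_norm hα (by linarith)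
  by_cases hez : ‖e - z‖ < 1 / 2
  · refine le_add_right (le_add_left ?_)
    rw [indicator_of_mem (mem_ball_zero_iff.2 hez), mul_comm]
    gcongr
    exact rieszKernel_le_of_le_norm hβ (by linarith)
  · refine le_add_left ?_
    -- Away from both poles, `‖z‖` and `‖e - z‖` are at least `(1 + ‖z‖) / 5`.
    have h_pos : ENNReal.ofReal ((1 + ‖z‖) / 5) ≠ 0 := by
      rw [ENNReal.ofReal_ne_zero_iff]
      positivity
    rw [show α + β - 2 * finrank ℝ E = (α - finrank ℝ E) + (β - finrank ℝ E) by ring,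
      ENNReal.rpow_add _ _ h_pos ENNReal.ofReal_ne_top]
    gcongr
    · exact rieszKernel_le_of_le_norm hα (by linarith)
    · exact rieszKernel_le_of_le_norm hβ (by linarith)

/-- The product of Riesz kernels of orders `α 0, …, α k` along the successive steps of a chain. -/
noncomputable def rieszChain {k : ℕ} (α : Fin (k + 1) → ℝ) (p : Fin (k + 2) → E) : ℝ≥0∞ :=
  ∏ j, rieszKernel (α j) (p j.castSucc - p j.succ)

theorem rieszChain_cons {k : ℕ} (α : Fin (k + 2) → ℝ) (x : E) (p : Fin (k + 2) → E) :
    rieszChain α (Fin.cons x p : Fin (k + 3) → E) =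
      rieszKernel (α 0) (x - p 0) * rieszChain (Fin.tail α) p := by
  simp [rieszChain, Fin.prod_univ_succ (n := k + 1), Fin.tail]

variable [MeasurableSpace E] [BorelSpace E]

@[fun_prop]
theorem measurable_rieszKernel (α : ℝ) : Measurable (rieszKernel α : E → ℝ≥0∞) :=
  measurable_enorm.pow_const _

variable [FiniteDimensional ℝ E] (μ : Measure E) [μ.IsAddHaarMeasure]

theorem lintegral_eq_mul_lintegral_comp_smul {r : ℝ} (hr : r ≠ 0) (f : E → ℝ≥0∞) :
    ∫⁻ z, f z ∂μ = ‖r‖ₑ ^ (finrank ℝ E : ℝ) * ∫⁻ z, f (r • z) ∂μ := by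
  rw [← (measurableEmbedding_const_smul₀ hr).lintegral_map, Measure.map_addHaar_smul μ hr,
    lintegral_smul_measure, smul_eq_mul, ← mul_assoc, ← Real.norm_eq_abs, ofReal_norm,
    enorm_inv (pow_ne_zero _ hr), enorm_pow, ENNReal.rpow_natCast, ENNReal.mul_inv_cancel,
    one_mul]
  · exact pow_ne_zero _ (enorm_ne_zero.2 hr)
  · exact ENNReal.pow_ne_top enorm_ne_top

theorem setLIntegral_ball_rieszKernel_lt_top [Nontrivial E] {α : ℝ} (hα : 0 < α) (r : ℝ) :
    ∫⁻ z in ball (0 : E) r, rieszKernel α z ∂μ < ∞ := by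
  have h_int : IntegrableOn (fun z : E ↦ ‖z‖ ^ (α - finrank ℝ E)) (ball 0 r) μ := by
    refine integrableOn_ball_of_norm_le_rpow (C := 1) (α := finrank ℝ E - α) finrank_pos
      (by linarith) (ae_of_all _ fun z ↦ ?_) (measurable_norm.pow_const _).aestronglyMeasurable
    rw [neg_sub, one_mul, norm_of_nonneg (by positivity)]
  refine lt_of_eq_of_lt (lintegral_congr_ae ?_) h_int.2
  filter_upwards [ae_restrict_of_ae (Measure.ae_ne μ 0)] with z hz
  rw [rieszKernel, ← ofReal_norm z, ENNReal.ofReal_rpow_of_pos (norm_pos_iff.2 hz),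
    Real.enorm_of_nonneg (by positivity)]

theorem lintegral_one_add_norm_div_rpow_neg_lt_top {c s : ℝ} (hc : 0 < c)
    (hs : finrank ℝ E < s) :
    ∫⁻ z, ENNReal.ofReal ((1 + ‖z‖) / c) ^ (-s) ∂μ < ∞ := by
  have h_split (z : E) : ENNReal.ofReal ((1 + ‖z‖) / c) ^ (-s) =
      ENNReal.ofReal ((1 + ‖z‖) ^ (-s)) * ENNReal.ofReal (c⁻¹ ^ (-s)) := by
    rw [ENNReal.ofReal_rpow_of_pos (by positivity), div_eq_mul_inv,
      mul_rpow (by positivity) (by positivity), ENNReal.ofReal_mul (by positivity)]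
  simp only [h_split]
  rw [lintegral_mul_const' _ _ ENNReal.ofReal_ne_top]
  exact ENNReal.mul_lt_top (finite_integral_one_add_norm hs) ENNReal.ofReal_lt_top

theorem exists_lintegral_rieszKernel_mul_rieszKernel_le_of_norm_eq_one {α β : ℝ} (hα : 0 < α)
    (hβ : 0 < β) (hαβ : α + β < finrank ℝ E) :
    ∃ C : ℝ≥0∞, C ≠ ∞ ∧ ∀ e : E, ‖e‖ = 1 →
      ∫⁻ z, rieszKernel α (e - z) * rieszKernel β z ∂μ ≤ C := by
  have : Nontrivial E := nontrivial_of_finrank_pos (R := ℝ) (by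
    exact_mod_cast (by linarith : (0 : ℝ) < finrank ℝ E))
  have h_half (γ : ℝ) : ENNReal.ofReal (1 / 2) ^ γ ≠ ∞ := by
    rw [ENNReal.ofReal_rpow_of_pos (by norm_num)]
    exact ENNReal.ofReal_ne_top
  have h_far : ∫⁻ z : E, ENNReal.ofReal ((1 + ‖z‖) / 5) ^ (α + β - 2 * finrank ℝ E) ∂μ ≠ ∞ := by
    rw [← neg_sub]
    exact (lintegral_one_add_norm_div_rpow_neg_lt_top μ (by norm_num) (by linarith)).ne
  refine ⟨_, ENNReal.add_ne_top.2 ⟨ENNReal.add_ne_top.2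
    ⟨ENNReal.mul_ne_top (h_half (α - finrank ℝ E))
      (setLIntegral_ball_rieszKernel_lt_top μ hβ (1 / 2)).ne,
    ENNReal.mul_ne_top (h_half (β - finrank ℝ E))
      (setLIntegral_ball_rieszKernel_lt_top μ hα (1 / 2)).ne⟩, h_far⟩, fun e he ↦ ?_⟩
  have h_ind (γ : ℝ) : Measurable ((ball (0 : E) (1 / 2)).indicator (rieszKernel γ)) :=
    (measurable_rieszKernel γ).indicator measurableSet_ball
  calc ∫⁻ z, rieszKernel α (e - z) * rieszKernel β z ∂μ
    _ ≤ _ := lintegral_mono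
        (rieszKernel_mul_rieszKernel_le (by linarith) (by linarith) he)
    _ = _ := by
      rw [lintegral_add_right _ (by fun_prop), lintegral_add_right _ (by fun_prop),
        lintegral_const_mul _ (by fun_prop), lintegral_const_mul _ (by fun_prop),
        lintegral_sub_left_eq_self ((ball (0 : E) (1 / 2)).indicator (rieszKernel α)) e,
        lintegral_indicator measurableSet_ball, lintegral_indicator measurableSet_ball]

theorem lintegral_rieszKernel_smul_sub_mul_rieszKernel (α β : ℝ) {r : ℝ} (hr : r ≠ 0) (e : E) :
    ∫⁻ z, rieszKernel α (r • e - z) * rieszKernel β z ∂μ =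
      ‖r‖ₑ ^ (α + β - finrank ℝ E) * ∫⁻ z, rieszKernel α (e - z) * rieszKernel β z ∂μ := by
  have h_pos : ‖r‖ₑ ≠ 0 := enorm_ne_zero.2 hr
  have h_fin : ‖r‖ₑ ≠ ∞ := enorm_ne_top
  rw [lintegral_eq_mul_lintegral_comp_smul μ hr]
  simp only [← smul_sub, rieszKernel_smul, mul_mul_mul_comm _ (rieszKernel α _)]
  rw [lintegral_const_mul _ (by fun_prop), ← mul_assoc, ← ENNReal.rpow_add _ _ h_pos h_fin,
    ← ENNReal.rpow_add _ _ h_pos h_fin]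
  ring_nf

theorem exists_lintegral_rieszKernel_mul_rieszKernel_le {α β : ℝ} (hα : 0 < α) (hβ : 0 < β)
    (hαβ : α + β < finrank ℝ E) :
    ∃ C : ℝ≥0∞, C ≠ 0 ∧ C ≠ ∞ ∧ ∀ x y : E,
      ∫⁻ z, rieszKernel α (x - z) * rieszKernel β (z - y) ∂μ ≤ C * rieszKernel (α + β) (x - y) := by
  obtain ⟨C, hC_top, hC⟩ :=
    exists_lintegral_rieszKernel_mul_rieszKernel_le_of_norm_eq_one μ hα hβ hαβ
  refine ⟨C + 1, by simp, by simp [hC_top], fun x y ↦ ?_⟩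
  rcases eq_or_ne x y with rfl | hxy
  · simp [rieszKernel_zero hαβ]
  have h_norm : ‖x - y‖ ≠ 0 := norm_ne_zero_iff.2 (sub_ne_zero.2 hxy)
  set e : E := ‖x - y‖⁻¹ • (x - y)
  have he : ‖e‖ = 1 := norm_smul_inv_norm (𝕜 := ℝ) (sub_ne_zero.2 hxy)
  have hxy_eq : x - y = ‖x - y‖ • e := (smul_inv_smul₀ h_norm _).symm
  calc ∫⁻ z, rieszKernel α (x - z) * rieszKernel β (z - y) ∂μ
    _ = ∫⁻ z, rieszKernel α (x - y - z) * rieszKernel β z ∂μ := by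
      rw [← lintegral_add_right_eq_self _ y]
      simp only [add_sub_cancel_right, sub_sub, add_comm y]
    _ = ‖x - y‖ₑ ^ (α + β - finrank ℝ E) * ∫⁻ z, rieszKernel α (e - z) * rieszKernel β z ∂μ := by
      rw [hxy_eq, lintegral_rieszKernel_smul_sub_mul_rieszKernel μ α β h_norm, ← hxy_eq, enorm_norm]
    _ ≤ ‖x - y‖ₑ ^ (α + β - finrank ℝ E) * (C + 1) := by
      gcongr
      exact (hC e he).trans le_self_add
    _ = (C + 1) * rieszKernel (α + β) (x - y) := mul_comm _ _

@[fun_prop]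
theorem measurable_rieszChain {k : ℕ} (α : Fin (k + 1) → ℝ) :
    Measurable (rieszChain α : (Fin (k + 2) → E) → ℝ≥0∞) := by
  unfold rieszChain
  fun_prop

theorem exists_lintegral_rieszChain_le {k : ℕ} (α : Fin (k + 1) → ℝ) (hα : ∀ j, 0 < α j)
    (h_sum : ∑ j, α j < finrank ℝ E) :
    ∃ C : ℝ≥0∞, C ≠ 0 ∧ C ≠ ∞ ∧ ∀ x y : E,
      ∫⁻ z, rieszChain α (chainPoint x y z) ∂Measure.pi (fun _ : Fin k ↦ μ) ≤
        C * rieszKernel (∑ j, α j) (x - y) := by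
  induction k with
  | zero => exact ⟨1, by simp, by simp, fun x y ↦ by simp [rieszChain, chainPoint, Fin.snoc]⟩
  | succ k ih =>
    rw [Fin.sum_univ_succ] at h_sum ⊢
    obtain ⟨A, hA_zero, hA_top, hA⟩ := ih (Fin.tail α) (fun j ↦ hα j.succ)
      ((lt_add_of_pos_left _ (hα 0)).trans h_sum)
    obtain ⟨B, hB_zero, hB_top, hB⟩ := exists_lintegral_rieszKernel_mul_rieszKernel_le μ (hα 0)
      (Finset.sum_pos (fun j _ ↦ hα (Fin.succ j)) Finset.univ_nonempty) h_sum
    refine ⟨A * B, mul_ne_zero hA_zero hB_zero, ENNReal.mul_ne_top hA_top hB_top, fun x y ↦ ?_⟩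
    calc ∫⁻ z, rieszChain α (chainPoint x y z) ∂Measure.pi (fun _ : Fin (k + 1) ↦ μ)
      _ ≤ ∫⁻ w, ∫⁻ z, rieszChain α (chainPoint x y (Fin.cons w z : Fin (k + 1) → E))
            ∂Measure.pi (fun _ : Fin k ↦ μ) ∂μ := lintegral_pi_fin_succ_le μ _
      _ = ∫⁻ w, rieszKernel (α 0) (x - w) *
            ∫⁻ z, rieszChain (Fin.tail α) (chainPoint w y z)
              ∂Measure.pi (fun _ : Fin k ↦ μ) ∂μ := by
        refine lintegral_congr fun w ↦ ?_
        simp only [chainPoint_cons, rieszChain_cons, chainPoint_zero]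
        exact lintegral_const_mul _ (by fun_prop)
      _ ≤ ∫⁻ w, A * (rieszKernel (α 0) (x - w) *
            rieszKernel (∑ j, α (Fin.succ j)) (w - y)) ∂μ := by
        refine lintegral_mono fun w ↦ ?_
        rw [mul_left_comm]
        gcongr
        exact hA w y
      _ ≤ A * B * rieszKernel (α 0 + ∑ j, α (Fin.succ j)) (x - y) := by
        rw [lintegral_const_mul' _ _ hA_top, mul_assoc]
        gcongr
        exact hB x y

theorem stmt9_general (m : ℕ) (hm : 1 ≤ m) (hmd : m < finrank ℝ E) :
    ∃ C : ℝ, 0 < C ∧ ∀ x y : E,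
      ∫⁻ z : Fin (m - 1) → E,
          ∏ j ∈ Finset.range m,
            (ENNReal.ofReal
              (‖(if j = 0 then x else if h : j - 1 < m - 1 then z ⟨j - 1, h⟩ else y) -
                 (if h : j < m - 1 then z ⟨j, h⟩ else y)‖ ^ (finrank ℝ E - 1)))⁻¹
          ∂Measure.pi (fun _ ↦ μ) ≤
        ENNReal.ofReal C * (ENNReal.ofReal (‖x - y‖ ^ (finrank ℝ E - m)))⁻¹ := by
  obtain ⟨k, rfl⟩ := Nat.exists_eq_add_of_le' hm
  have h_sum : ∑ _j : Fin (k + 1), (1 : ℝ) = (k + 1 : ℕ) := by simp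
  obtain ⟨C, hC_zero, hC_top, hC⟩ := exists_lintegral_rieszChain_le μ
    (fun _ : Fin (k + 1) ↦ 1) (fun _ ↦ one_pos) (by rw [h_sum]; exact_mod_cast hmd)
  refine ⟨C.toReal, ENNReal.toReal_pos hC_zero hC_top, fun x y ↦ ?_⟩
  rw [ENNReal.ofReal_toReal hC_top, ← rieszKernel_natCast hmd.le, ← h_sum]
  convert! hC x y using 3
  simp only [rieszChain, chainPoint_castSucc, chainPoint_succ, Finset.prod_range]
  refine Finset.prod_congr rfl fun j _ ↦ ?_
  rw [← rieszKernel_natCast (by omega), Nat.cast_one]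
  rfl

end RieszKernel

/-- iterated convolution estimate: for `n ≥ 3`, `2 ≤ m ≤ n-1` and a
bounded measurable `Ω ⊂ ℝⁿ`, there is `C > 0` such that for all `x ≠ y`, with
`y₀ = x`, `y_m = y`,
`∫_Ω ⋯ ∫_Ω ∏_{j=0}^{m-1} |y_j - y_{j+1}|^{-(n-1)} dy₁ ⋯ dy_{m-1} ≤ C |x-y|^{-(n-m)}`. -/
theorem stmt9 (n m : ℕ) (hn : 3 ≤ n) (hm2 : 2 ≤ m) (hmn : m ≤ n - 1)
    (Ω : Set (EuclideanSpace ℝ (Fin n)))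
    (hΩm : MeasurableSet Ω) (hΩb : Bornology.IsBounded Ω) :
    ∃ C : ℝ, 0 < C ∧ ∀ x y : EuclideanSpace ℝ (Fin n), x ≠ y →
      ∫⁻ z in {z : Fin (m - 1) → EuclideanSpace ℝ (Fin n) | ∀ i, z i ∈ Ω},
          ∏ j ∈ Finset.range m,
            (ENNReal.ofReal
              (‖(if j = 0 then x else if h : j - 1 < m - 1 then z ⟨j - 1, h⟩ else y) -
                 (if h : j < m - 1 then z ⟨j, h⟩ else y)‖ ^ (n - 1)))⁻¹ ≤
        ENNReal.ofReal C * (ENNReal.ofReal (‖x - y‖ ^ (n - m)))⁻¹ := by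
  obtain ⟨C, hC, h⟩ := stmt9_general (E := EuclideanSpace ℝ (Fin n)) volume m (by omega)
    (by rw [finrank_euclideanSpace_fin]; omega)
  rw [finrank_euclideanSpace_fin] at h
  exact ⟨C, hC, fun x y _ ↦ (setLIntegral_le_lintegral _ _).trans (h x y)⟩
end

section
/- Let η ∈ ℝ with cos η ≠ 0. Define the maps on ℝ²: s_{y,a}(x,y) = (x, y - a x), s_{x,b}(x,y) = (x - b y, y), d_{x,t}(x,y) = (t x, y), d_{y,t}(x,y) = (x, t y), and the clockwise rotation r_η(x,y) = ( x cos η + y sin η, -x sin η + y cos η ). Then r_η = d_{x, 1/cos η} ∘ s_{x, -sin η} ∘ d_{y, cos η} ∘ s_{y, tan η} as maps ℝ² → ℝ². -/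
open Real

/- Composing from the right, the first shear and dilation replace `y` by the second coordinate
`z = c x + d y` of the image of `(x, y)` under the matrix `!![a, b; c, d]`. Since
`d (a x + b y) = (a d - b c) x + b z`, the remaining shear and dilation can then recover the first
coordinate of the image from `(x, z)`. A rotation is the case of determinant `1`. -/

section Plane

variable {K : Type*} [Field K]

/-- The shear `s_{x,b}` along the `x`-axis, with the paper's minus sign, so that its matrix is
`!![1, -b; 0, 1]`. -/
def shearX (b : K) (p : K × K) : K × K := (p.1 - b * p.2, p.2)

/-- The shear `s_{y,a}` along the `y`-axis, with the same sign convention as `shearX`: its matrix is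
`!![1, 0; -a, 1]`. -/
def shearY (a : K) (p : K × K) : K × K := (p.1, p.2 - a * p.1)

/-- The dilation `d_{x,t}` of the first coordinate by the factor `t`, which may be zero. -/
def dilateX (t : K) (p : K × K) : K × K := (t * p.1, p.2)

/-- The dilation `d_{y,t}` of the second coordinate by the factor `t`, which may be zero. -/
def dilateY (t : K) (p : K × K) : K × K := (p.1, t * p.2)

theorem dilateY_shearY_neg_div {d : K} (hd : d ≠ 0) (c : K) (p : K × K) :
    dilateY d (shearY (-c / d) p) = (p.1, c * p.1 + d * p.2) := by
  ext
  · rfl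
  · simp only [dilateY, shearY]
    field_simp
    ring

theorem dilateX_div_shearX_neg_div {Δ : K} (hΔ : Δ ≠ 0) (b d : K) (p : K × K) :
    dilateX (Δ / d) (shearX (-b / Δ) p) = ((Δ * p.1 + b * p.2) / d, p.2) := by
  ext
  · simp only [dilateX, shearX]
    field_simp
    ring
  · rfl

theorem toLin_finTwoProd_eq_dilate_comp_shear {A : Matrix (Fin 2) (Fin 2) K}
    (hdet : A.det ≠ 0) (hA : A 1 1 ≠ 0) :
    ⇑(Matrix.toLin (.finTwoProd K) (.finTwoProd K) A) =
      dilateX (A.det / A 1 1) ∘ shearX (-A 0 1 / A.det) ∘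
        dilateY (A 1 1) ∘ shearY (-A 1 0 / A 1 1) := by
  funext p
  have hfst : A 0 0 * p.1 + A 0 1 * p.2 =
      (A.det * p.1 + A 0 1 * (A 1 0 * p.1 + A 1 1 * p.2)) / A 1 1 := by
    rw [eq_div_iff hA, Matrix.det_fin_two]
    ring
  calc Matrix.toLin (.finTwoProd K) (.finTwoProd K) A p
      = (A 0 0 * p.1 + A 0 1 * p.2, A 1 0 * p.1 + A 1 1 * p.2) := by
        rw [Matrix.eta_fin_two A, Matrix.toLin_finTwoProd_apply]
        rfl
    _ = dilateX (A.det / A 1 1) (shearX (-A 0 1 / A.det)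
          (p.1, A 1 0 * p.1 + A 1 1 * p.2)) := by
        rw [dilateX_div_shearX_neg_div hdet, hfst]
    _ = dilateX (A.det / A 1 1) (shearX (-A 0 1 / A.det)
          (dilateY (A 1 1) (shearY (-A 1 0 / A 1 1) p))) := by
        rw [dilateY_shearY_neg_div hA]

theorem stmt17_general {c s : K} (hc : c ≠ 0) (hcs : c ^ 2 + s ^ 2 = 1) :
    (fun p : K × K ↦ (p.1 * c + p.2 * s, -p.1 * s + p.2 * c)) =
      dilateX (1 / c) ∘ shearX (-s) ∘ dilateY c ∘ shearY (s / c) := by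
  let R : Matrix (Fin 2) (Fin 2) K := !![c, s; -s, c]
  have hdet : R.det = 1 := by
    rw [Matrix.det_fin_two_of, mul_neg, sub_neg_eq_add, ← sq, ← sq, hcs]
  have hR : ⇑(Matrix.toLin (.finTwoProd K) (.finTwoProd K) R) =
      dilateX (R.det / c) ∘ shearX (-s / R.det) ∘ dilateY c ∘ shearY (-(-s) / c) :=
    toLin_finTwoProd_eq_dilate_comp_shear (hdet ▸ one_ne_zero) hc
  rw [hdet, div_one, neg_neg] at hR
  rw [← hR]
  funext p
  rw [Matrix.toLin_finTwoProd_apply]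
  ring_nf

end Plane

/-- factorization of the clockwise planar rotation
`r_η(x,y) = (x cos η + y sin η, -x sin η + y cos η)` into two shears and two
one-dimensional dilations: `r_η = d_{x,1/cos η} ∘ s_{x,-sin η} ∘ d_{y,cos η} ∘ s_{y,tan η}`. -/
theorem stmt17 (η : ℝ) (hη : Real.cos η ≠ 0)
    (sy : ℝ → ℝ × ℝ → ℝ × ℝ) (hsy : ∀ a p, sy a p = (p.1, p.2 - a * p.1))
    (sx : ℝ → ℝ × ℝ → ℝ × ℝ) (hsx : ∀ b p, sx b p = (p.1 - b * p.2, p.2))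
    (dx : ℝ → ℝ × ℝ → ℝ × ℝ) (hdx : ∀ t p, dx t p = (t * p.1, p.2))
    (dy : ℝ → ℝ × ℝ → ℝ × ℝ) (hdy : ∀ t p, dy t p = (p.1, t * p.2))
    (r : ℝ × ℝ → ℝ × ℝ)
    (hr : ∀ p, r p = (p.1 * Real.cos η + p.2 * Real.sin η,
      -p.1 * Real.sin η + p.2 * Real.cos η)) :
    r = dx (1 / Real.cos η) ∘ sx (-Real.sin η) ∘ dy (Real.cos η) ∘ sy (Real.tan η) := by
  rw [funext hr, (funext₂ hdx : dx = dilateX), (funext₂ hsx : sx = shearX),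
    (funext₂ hdy : dy = dilateY), (funext₂ hsy : sy = shearY), tan_eq_sin_div_cos]
  exact stmt17_general hη (cos_sq_add_sin_sq η)
end
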